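/- Under the same hypotheses (Gysin sequence with H^* the cohomology of a homotopy (4n+3)-sphere), the graded vector space B^* is isomorphic as a graded vector space to the real cohomology of the quaternionic projective space ℍP^n, i.e., B^{4i} = ℝ for 0 ≤ i ≤ n and B^j = 0 for all other j with 0 ≤ j ≤ 4n. -/

import Mathlib

/-- under the Gysin-sequence hypotheses for a homotopy
`(4n+3)`-sphere, the basic cohomology `B^*` is that of `ℍP^n` as a graded
vector space. -/
theorem stmt1 (n : ℕ) (VB VH : Type) [AddCommGroup VB] [Module ℝ VB]
    [AddCommGroup VH] [Module ℝ VH]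
    (B : ℤ → Submodule ℝ VB) (Hgr : ℤ → Submodule ℝ VH)
    (ι : VB →ₗ[ℝ] VH) (ρ : VH →ₗ[ℝ] VB) (L : VB →ₗ[ℝ] VB)
    (hι : ∀ k : ℤ, ∀ x ∈ B k, ι x ∈ Hgr k)
    (hρ : ∀ k : ℤ, ∀ y ∈ Hgr k, ρ y ∈ B (k - 3))
    (hL : ∀ k : ℤ, ∀ x ∈ B k, L x ∈ B (k + 4))
    (hexH : ∀ k : ℤ, ∀ y ∈ Hgr k, (ρ y = 0 ↔ ∃ x ∈ B k, ι x = y))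
    (hexB1 : ∀ k : ℤ, ∀ x ∈ B (k - 3), (L x = 0 ↔ ∃ y ∈ Hgr k, ρ y = x))
    (hexB2 : ∀ k : ℤ, ∀ x ∈ B (k + 1), (ι x = 0 ↔ ∃ y ∈ B (k - 3), L y = x))
    (hH1 : Module.finrank ℝ ↥(Hgr 0) = 1)
    (hH2 : Module.finrank ℝ ↥(Hgr (4 * n + 3)) = 1)
    (hH0 : ∀ i : ℤ, i ≠ 0 → i ≠ 4 * n + 3 → Hgr i = ⊥)
    (hB0 : Module.finrank ℝ ↥(B 0) = 1)
    (hBhigh : ∀ i : ℤ, 4 * n < i → B i = ⊥)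
    (hBneg : ∀ i : ℤ, i < 0 → B i = ⊥) :
    (∀ i : ℕ, i ≤ n → Module.finrank ℝ ↥(B (4 * i)) = 1) ∧
    (∀ j : ℤ, 0 ≤ j → j ≤ 4 * n → (∀ i : ℕ, i ≤ n → j ≠ 4 * i) → B j = ⊥) := by
  have inj : ∀ j : ℤ, j ≠ -3 → j ≠ 4 * n → ∀ x ∈ B j, L x = 0 → x = 0 := by
    intro j h1 h2 x hx hx0
    have hx' : x ∈ B (j + 3 - 3) := by
      rwa [show j + 3 - 3 = j by ring]
    obtain ⟨y, hy, rfl⟩ := (hexB1 (j + 3) x hx').1 hx0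
    rw [hH0 (j + 3) (by omega) (by omega)] at hy
    rw [(Submodule.mem_bot ℝ).1 hy, map_zero]
  have surj : ∀ j : ℤ, j ≠ 0 → j ≠ 4 * n + 3 → ∀ x ∈ B j, ∃ y ∈ B (j - 4), L y = x := by
    intro j h1 h2 x hx
    have h3 := hι j x hx
    rw [hH0 j h1 h2] at h3
    have hx' : x ∈ B (j - 1 + 1) := by
      rwa [show j - 1 + 1 = j by ring]
    obtain ⟨y, hy, h⟩ := (hexB2 (j - 1) x hx').1 ((Submodule.mem_bot ℝ).1 h3)
    rw [show j - 1 - 3 = j - 4 by ring] at hy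
    exact ⟨y, hy, h⟩
  constructor
  · intro i
    induction i with
    | zero => intro _; simpa using hB0
    | succ i ih =>
      intro hi
      refine Eq.trans ?_ (ih (by omega))
      have hmap : ∀ x ∈ B (4 * (i : ℤ)), L x ∈ B (4 * ((i + 1 : ℕ) : ℤ)) := by
        intro x hx
        have := hL _ x hx
        rwa [show 4 * ((i + 1 : ℕ) : ℤ) = 4 * (i : ℤ) + 4 by push_cast; ring]
      refine (LinearEquiv.finrank_eq (LinearEquiv.ofBijective (L.restrict hmap) ⟨?_, ?_⟩)).symm
      · rw [injective_iff_map_eq_zero]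
        rintro ⟨x, hx⟩ h
        have h' : L x = 0 := congrArg Subtype.val h
        exact Subtype.ext (inj _ (by omega) (by omega) x hx h')
      · rintro ⟨x, hx⟩
        obtain ⟨y, hy, h⟩ := surj _ (by omega) (by omega) x hx
        rw [show 4 * ((i + 1 : ℕ) : ℤ) - 4 = 4 * (i : ℤ) by push_cast; ring] at hy
        exact ⟨⟨y, hy⟩, Subtype.ext h⟩
  · have key : ∀ m : ℕ, ∀ j : ℤ, j < 4 * m → j ≤ 4 * n → ¬ (4 ∣ j) → B j = ⊥ := by
      intro m
      induction m with
      | zero => intro j h _ _; exact hBneg j (by simpa using h)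
      | succ m ih =>
        intro j h1 h2 h3
        rw [eq_bot_iff]
        intro x hx
        obtain ⟨y, hy, rfl⟩ := surj j (by omega) (by omega) x hx
        rw [ih (j - 4) (by omega) (by omega) (by omega)] at hy
        rw [(Submodule.mem_bot ℝ).1 hy, map_zero]
        exact Submodule.zero_mem _
    intro j h0 h1 h2
    refine key (n + 1) j (by omega) h1 ?_
    rintro ⟨c, hc⟩
    exact h2 c.toNat (by omega) (by omega)
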